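/- Let N ≥ 0 be an even integer, let 0 < a ≤ 1, and let b⁻ ∈ [0, 1/2) and b⁺ ∈ [1/2, 1) be roots of the Bernoulli polynomial B_{N+2} (such roots exist and are unique in those intervals). Then the Hurwitz zeta function σ ↦ ζ(σ, a) has a real zero in the open interval (-N-1, -N) if and only if 0 < a < b⁻ or 1/2 < a < b⁺. -/

import Mathlib

open HurwitzZeta Polynomial Set

/-- The `n`-th Bernoulli polynomial evaluated at a real number. -/
noncomputable def bernoulliPoly (n : ℕ) (x : ℝ) : ℝ := Polynomial.aeval x (Polynomial.bernoulli n)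

/-!
Write `N = 2j` and `k = N + 2`, and let `B̃ₖ` be the `k`-th periodized Bernoulli function. By the
functional equation, `ζ(s, a)` is the sum of `(2πin)^(s-1) e^(2πina)` over the nonzero integers
`n`, times `Γ(1 - s)`; integrating the Fourier series of `B̃ₖ` term by term against `t^(r-1)`
turns this, for `s = 1 - k - r` and `-1 < r < 0`, into
`ζ(s, a) = -Γ(k + r) / (k! Γ(r)) ∫₀^∞ t^(r-1) (B̃ₖ(a - t) - B̃ₖ(a)) dt`.

Up to the sign `(-1)^j`, the function `B̃ₖ` has the shape of a cosine. For `a ≤ 1/2` the bracket is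
therefore positive for `t < 2a` and nonpositive on the rest of the period; if in addition its mean
`-(-1)^j B̃ₖ(a)` is nonnegative, the decreasing weight `t^(r-1)` makes the integral over every
period positive, so that there is no zero. Half a period further on, the same applies with the
opposite sign. In the remaining cases `ζ(-N, a) = -B_{N+1}(a) / (N + 1)` and
`ζ(-N-1, a) = -B_{N+2}(a) / (N + 2)` have opposite signs.
-/

section

open MeasureTheory Filter Topology Asymptotics
open scoped Real

/-! ### Mellin transform of `t ↦ exp (-z * t) - 1` -/

lemma norm_exp_neg_mul_sub_one_le {z : ℂ} (hz : 0 ≤ z.re) {t : ℝ} (ht : 0 ≤ t) :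
    ‖Complex.exp (-z * t) - 1‖ ≤ 2 * min 1 (‖z‖ * t) := by
  have hnorm : ‖-z * (t : ℂ)‖ = ‖z‖ * t := by
    rw [norm_mul, norm_neg, Complex.norm_of_nonneg ht]
  rcases le_total (‖z‖ * t) 1 with h | h
  · rw [min_eq_right h, ← hnorm]
    exact Complex.norm_exp_sub_one_le (hnorm.trans_le h)
  · have hexp : ‖Complex.exp (-z * t)‖ ≤ 1 := by
      rw [Complex.norm_exp, Real.exp_le_one_iff, Complex.re_mul_ofReal, Complex.neg_re, neg_mul]
      exact neg_nonpos.2 (mul_nonneg hz ht)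
    rw [min_eq_left h]
    linarith [norm_sub_le (Complex.exp (-z * t)) 1, norm_one (α := ℂ)]

lemma integrableOn_rpow_mul_min_one {r : ℝ} (hr : r ∈ Ioo (-1) 0) {c : ℝ} (hc : 0 ≤ c) :
    IntegrableOn (fun t : ℝ ↦ t ^ (r - 1) * min 1 (c * t)) (Ioi 0) := by
  refine mellin_convergent_of_isBigO_scalar (a := 0) (b := -1) ?_ ?_ hr.2 ?_ hr.1
  · exact (by fun_prop : Continuous fun t : ℝ ↦ min 1 (c * t)).continuousOn.locallyIntegrableOn
      measurableSet_Ioi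
  · refine IsBigO.of_bound 1 ?_
    filter_upwards [eventually_ge_atTop 0] with t ht
    rw [neg_zero, Real.rpow_zero, norm_one, mul_one, Real.norm_of_nonneg (by positivity)]
    exact min_le_left _ _
  · refine IsBigO.of_bound c ?_
    filter_upwards [self_mem_nhdsWithin] with t (ht : 0 < t)
    rw [neg_neg, Real.rpow_one, Real.norm_of_nonneg (by positivity), Real.norm_of_nonneg ht.le]
    exact min_le_right _ _

lemma integral_rpow_mul_min_one (r : ℝ) {c : ℝ} (hc : 0 < c) :
    ∫ t in Ioi (0 : ℝ), t ^ (r - 1) * min 1 (c * t) =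
      c ^ (-r) * ∫ t in Ioi (0 : ℝ), t ^ (r - 1) * min 1 t := by
  have hscale := integral_comp_mul_left_Ioi (fun t : ℝ ↦ t ^ (r - 1) * min 1 t) 0 hc
  rw [mul_zero, smul_eq_mul] at hscale
  have hpow : c ^ (-r) = c ^ (1 - r) * c⁻¹ := by
    rw [← Real.rpow_neg_one c, ← Real.rpow_add hc]
    ring_nf
  rw [hpow, mul_assoc, ← hscale, ← integral_const_mul]
  refine setIntegral_congr_fun measurableSet_Ioi fun t (ht : 0 < t) ↦ ?_
  have hone : c ^ (1 - r) * c ^ (r - 1) = 1 := by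
    rw [← Real.rpow_add hc, sub_add_sub_cancel, sub_self, Real.rpow_zero]
  rw [Real.mul_rpow hc.le ht.le]
  linear_combination -(t ^ (r - 1) * min 1 (c * t)) * hone

lemma norm_cpow_mul_exp_neg_mul_sub_one_le (w : ℂ) {z : ℂ} (hz : 0 ≤ z.re) {t : ℝ} (ht : 0 < t) :
    ‖(t : ℂ) ^ (w - 1) • (Complex.exp (-z * t) - 1)‖ ≤
      2 * (t ^ (w.re - 1) * min 1 (‖z‖ * t)) := by
  rw [norm_smul, Complex.norm_cpow_eq_rpow_re_of_pos ht, Complex.sub_re, Complex.one_re,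
    mul_left_comm]
  gcongr
  exact norm_exp_neg_mul_sub_one_le hz ht.le

lemma mellinConvergent_exp_neg_mul_sub_one {w : ℂ} (hw : w.re ∈ Ioo (-1) 0) {z : ℂ}
    (hz : 0 ≤ z.re) : MellinConvergent (fun t : ℝ ↦ Complex.exp (-z * t) - 1) w := by
  refine ((integrableOn_rpow_mul_min_one hw (norm_nonneg z)).const_mul 2).mono' ?_ ?_
  · exact Measurable.aestronglyMeasurable (by fun_prop)
  · exact (ae_restrict_mem measurableSet_Ioi).mono fun t ht ↦
      norm_cpow_mul_exp_neg_mul_sub_one_le w hz ht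

lemma integral_norm_cpow_mul_exp_neg_mul_sub_one_le {w : ℂ} (hw : w.re ∈ Ioo (-1) 0) {z : ℂ}
    (hz : 0 ≤ z.re) :
    ∫ t in Ioi (0 : ℝ), ‖(t : ℂ) ^ (w - 1) • (Complex.exp (-z * t) - 1)‖ ≤
      2 * (‖z‖ ^ (-w.re) * ∫ t in Ioi (0 : ℝ), t ^ (w.re - 1) * min 1 t) := by
  rcases eq_or_ne z 0 with rfl | hz0
  · simp [Real.zero_rpow (neg_ne_zero.2 hw.2.ne)]
  · rw [← integral_rpow_mul_min_one _ (norm_pos_iff.2 hz0), ← integral_const_mul]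
    exact setIntegral_mono_on (mellinConvergent_exp_neg_mul_sub_one hw hz).norm
      ((integrableOn_rpow_mul_min_one hw (norm_nonneg z)).const_mul 2) measurableSet_Ioi
      fun t ht ↦ norm_cpow_mul_exp_neg_mul_sub_one_le w hz ht

lemma tendsto_exp_neg_mul_sub_one_mul_cpow_nhdsGT_zero {w : ℂ} (hw : -1 < w.re) {z : ℂ}
    (hz : 0 ≤ z.re) :
    Tendsto (fun t : ℝ ↦ (Complex.exp (-z * t) - 1) * (t : ℂ) ^ w) (𝓝[>] 0) (𝓝 0) := by
  have hlim : Tendsto (fun t : ℝ ↦ 2 * ‖z‖ * t ^ (1 + w.re)) (𝓝[>] 0) (𝓝 0) := by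
    have := (Real.continuousAt_rpow_const 0 (1 + w.re) (Or.inr (by linarith))).tendsto
    rw [Real.zero_rpow (by linarith)] at this
    simpa using (this.mono_left nhdsWithin_le_nhds).const_mul (2 * ‖z‖)
  refine squeeze_zero_norm' ?_ hlim
  filter_upwards [self_mem_nhdsWithin] with t (ht : 0 < t)
  rw [norm_mul, Complex.norm_cpow_eq_rpow_re_of_pos ht, Real.rpow_add ht, Real.rpow_one,
    ← mul_assoc, mul_assoc 2]
  gcongr
  exact (norm_exp_neg_mul_sub_one_le hz ht.le).trans (by gcongr; exact min_le_right _ _)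

lemma tendsto_exp_neg_mul_sub_one_mul_cpow_atTop {w : ℂ} (hw : w.re < 0) {z : ℂ}
    (hz : 0 ≤ z.re) :
    Tendsto (fun t : ℝ ↦ (Complex.exp (-z * t) - 1) * (t : ℂ) ^ w) atTop (𝓝 0) := by
  have hlim : Tendsto (fun t : ℝ ↦ 2 * t ^ w.re) atTop (𝓝 0) := by
    simpa using (tendsto_rpow_neg_atTop (neg_pos.2 hw)).const_mul 2
  refine squeeze_zero_norm' ?_ hlim
  filter_upwards [eventually_gt_atTop 0] with t ht
  rw [norm_mul, Complex.norm_cpow_eq_rpow_re_of_pos ht]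
  gcongr
  exact (norm_exp_neg_mul_sub_one_le hz ht.le).trans (by linarith [min_le_left 1 (‖z‖ * t)])

lemma norm_cpow_mul_exp_neg_mul {a z : ℂ} {t : ℝ} (ht : 0 < t) :
    ‖(t : ℂ) ^ (a - 1) * Complex.exp (-z * t)‖ = t ^ (a.re - 1) * Real.exp (-z.re * t) := by
  rw [norm_mul, Complex.norm_cpow_eq_rpow_re_of_pos ht, Complex.norm_exp]
  simp

lemma integrableOn_rpow_mul_exp_neg_mul {s b : ℝ} (hs : -1 < s) (hb : 0 < b) :
    IntegrableOn (fun t : ℝ ↦ t ^ s * Real.exp (-b * t)) (Ioi 0) := by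
  simpa using integrableOn_rpow_mul_exp_neg_mul_rpow hs one_pos hb

lemma integrableOn_cpow_mul_exp_neg_mul {a z : ℂ} (ha : 0 < a.re) (hz : 0 < z.re) :
    IntegrableOn (fun t : ℝ ↦ (t : ℂ) ^ (a - 1) * Complex.exp (-z * t)) (Ioi 0) := by
  refine (integrableOn_rpow_mul_exp_neg_mul (s := a.re - 1) (by linarith) hz).mono'
    (Measurable.aestronglyMeasurable (by fun_prop)) ?_
  exact (ae_restrict_mem measurableSet_Ioi).mono fun t ht ↦ (norm_cpow_mul_exp_neg_mul ht).le

lemma differentiableAt_integral_cpow_mul_exp_neg_mul {a z : ℂ} (ha : 0 < a.re) (hz : 0 < z.re) :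
    DifferentiableAt ℂ
      (fun z ↦ ∫ t in Ioi (0 : ℝ), (t : ℂ) ^ (a - 1) * Complex.exp (-z * t)) z := by
  have hnhds : {x : ℂ | z.re / 2 < x.re} ∈ 𝓝 z :=
    (isOpen_lt continuous_const Complex.continuous_re).mem_nhds (half_lt_self hz)
  refine (hasDerivAt_integral_of_dominated_loc_of_deriv_le hnhds
    (F := fun z t ↦ (t : ℂ) ^ (a - 1) * Complex.exp (-z * t)) (μ := volume.restrict (Ioi 0))
    (F' := fun z t ↦ (t : ℂ) ^ (a - 1) * (Complex.exp (-z * t) * -t))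
    (bound := fun t : ℝ ↦ t ^ a.re * Real.exp (-(z.re / 2) * t))
    (Eventually.of_forall fun x ↦ Measurable.aestronglyMeasurable (by fun_prop))
    (integrableOn_cpow_mul_exp_neg_mul ha hz)
    (Measurable.aestronglyMeasurable (by fun_prop)) ?_
    (integrableOn_rpow_mul_exp_neg_mul (by linarith) (half_pos hz)) ?_).2.differentiableAt
  · filter_upwards [ae_restrict_mem measurableSet_Ioi] with t (ht : 0 < t) x (hx : _ < _)
    rw [← mul_assoc, norm_mul, norm_cpow_mul_exp_neg_mul ht, norm_neg,
      Complex.norm_of_nonneg ht.le, mul_right_comm, ← Real.rpow_add_one ht.ne', sub_add_cancel]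
    gcongr
  · refine Eventually.of_forall fun t x _ ↦ ?_
    simpa using ((hasDerivAt_id x).neg.mul_const (t : ℂ)).cexp.const_mul ((t : ℂ) ^ (a - 1))

lemma integral_cpow_mul_exp_neg_mul {a z : ℂ} (ha : 0 < a.re) (hz : 0 < z.re) :
    ∫ t in Ioi (0 : ℝ), (t : ℂ) ^ (a - 1) * Complex.exp (-z * t) =
      Complex.Gamma a * z ^ (-a) := by
  have hopen : IsOpen {z : ℂ | 0 < z.re} := isOpen_lt continuous_const Complex.continuous_re
  have hreal : Tendsto ((↑) : ℝ → ℂ) (𝓝[>] 1) (𝓝[≠] 1) := by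
    refine tendsto_nhdsWithin_iff.2 ⟨?_, ?_⟩
    · exact (Complex.continuous_ofReal.tendsto' 1 1 Complex.ofReal_one).mono_left
        nhdsWithin_le_nhds
    · filter_upwards [self_mem_nhdsWithin] with x hx
      exact Complex.ofReal_ne_one.2 (ne_of_gt hx)
  refine AnalyticOnNhd.eqOn_of_preconnected_of_frequently_eq
    (DifferentiableOn.analyticOnNhd (fun z hz ↦
      (differentiableAt_integral_cpow_mul_exp_neg_mul ha hz).differentiableWithinAt) hopen)
    (DifferentiableOn.analyticOnNhd (f := fun z ↦ Complex.Gamma a * z ^ (-a)) (fun z hz ↦ ?_) hopen)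
    (convex_halfSpace_re_gt 0).isPreconnected (z₀ := 1)
    (by simp : (0 : ℝ) < (1 : ℂ).re)
    (hreal.frequently (Eventually.frequently ?_)) hz
  · exact ((differentiableAt_id.cpow_const (Or.inl hz)).const_mul _).differentiableWithinAt
  · filter_upwards [self_mem_nhdsWithin] with x (hx : 1 < x)
    have hx0 : 0 < x := one_pos.trans hx
    simp only [neg_mul]
    rw [Complex.integral_cpow_mul_exp_neg_mul_Ioi ha hx0, one_div, Complex.inv_cpow _ _ ?_,
      Complex.cpow_neg, mul_comm]
    rw [Complex.arg_ofReal_of_nonneg hx0.le]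
    exact Real.pi_ne_zero.symm

lemma mellin_exp_neg_mul_sub_one_of_re_pos {w : ℂ} (hw : w.re ∈ Ioo (-1) 0) {z : ℂ}
    (hz : 0 < z.re) :
    mellin (fun t : ℝ ↦ Complex.exp (-z * t) - 1) w = Complex.Gamma w * z ^ (-w) := by
  have hw0 : w ≠ 0 := fun h ↦ hw.2.ne (by rw [h, Complex.zero_re])
  have hz0 : z ≠ 0 := fun h ↦ hz.ne' (by rw [h, Complex.zero_re])
  have hw1 : 0 < (w + 1).re := by rw [Complex.add_re, Complex.one_re]; linarith [hw.1]
  have hexp : ∀ t ∈ Ioi (0 : ℝ), HasDerivAt (fun t : ℝ ↦ Complex.exp (-z * t) - 1)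
      (-z * Complex.exp (-z * t)) t := fun t _ ↦ by
    simpa [mul_comm] using
      ((Complex.ofRealCLM.hasDerivAt (x := t)).const_mul (-z)).cexp.sub_const 1
  have hcpow : ∀ t ∈ Ioi (0 : ℝ), HasDerivAt (fun t : ℝ ↦ (t : ℂ) ^ w)
      (w * (t : ℂ) ^ (w - 1)) t := fun t ht ↦ hasDerivAt_ofReal_cpow_const ht.ne' hw0
  have hparts := integral_Ioi_mul_deriv_eq_deriv_mul hexp hcpow ?_ ?_
    (tendsto_exp_neg_mul_sub_one_mul_cpow_nhdsGT_zero hw.1 hz.le)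
    (tendsto_exp_neg_mul_sub_one_mul_cpow_atTop hw.2 hz.le)
  · have hlaplace := integral_cpow_mul_exp_neg_mul hw1 hz
    rw [add_sub_cancel_right] at hlaplace
    refine mul_left_cancel₀ hw0 ?_
    calc w * mellin (fun t : ℝ ↦ Complex.exp (-z * t) - 1) w
        = ∫ t in Ioi (0 : ℝ), (Complex.exp (-z * t) - 1) * (w * (t : ℂ) ^ (w - 1)) := by
          rw [mellin, ← integral_const_mul]
          simp only [smul_eq_mul, mul_comm, mul_assoc]
      _ = z * ∫ t in Ioi (0 : ℝ), (t : ℂ) ^ w * Complex.exp (-z * t) := by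
          rw [hparts, sub_zero, zero_sub, ← integral_neg, ← integral_const_mul]
          congr 1 with t
          ring
      _ = w * (Complex.Gamma w * z ^ (-w)) := by
          rw [hlaplace, Complex.Gamma_add_one w hw0, neg_add, Complex.cpow_add _ _ hz0,
            Complex.cpow_neg_one]
          field_simp
  · refine IntegrableOn.congr_fun ((mellinConvergent_exp_neg_mul_sub_one hw hz.le).const_mul w)
      (fun t _ ↦ ?_) measurableSet_Ioi
    simp only [smul_eq_mul, Pi.mul_apply]
    ring
  · have hint := integrableOn_cpow_mul_exp_neg_mul hw1 hz
    rw [add_sub_cancel_right] at hint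
    refine IntegrableOn.congr_fun (hint.const_mul (-z)) (fun t _ ↦ ?_) measurableSet_Ioi
    simp only [Pi.mul_apply]
    ring

lemma continuousOn_mellin_exp_neg_mul_sub_one {w : ℂ} (hw : w.re ∈ Ioo (-1) 0) :
    ContinuousOn (fun z : ℂ ↦ mellin (fun t : ℝ ↦ Complex.exp (-z * t) - 1) w)
      {z | 0 ≤ z.re} := by
  intro z _
  refine continuousWithinAt_of_dominated
    (bound := fun t : ℝ ↦ 2 * (t ^ (w.re - 1) * min 1 ((‖z‖ + 1) * t)))
    (Eventually.of_forall fun x ↦ Measurable.aestronglyMeasurable (by fun_prop)) ?_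
    ((integrableOn_rpow_mul_min_one hw (by positivity)).const_mul 2)
    (Eventually.of_forall fun t ↦ Continuous.continuousWithinAt (by fun_prop))
  have hnorm : ∀ᶠ x in 𝓝[{z : ℂ | 0 ≤ z.re}] z, ‖x‖ < ‖z‖ + 1 :=
    nhdsWithin_le_nhds (continuous_norm.continuousAt.eventually_lt_const (lt_add_one _))
  filter_upwards [hnorm, self_mem_nhdsWithin] with x hx (hx0 : 0 ≤ x.re)
  filter_upwards [ae_restrict_mem measurableSet_Ioi] with t (ht : 0 < t)
  exact (norm_cpow_mul_exp_neg_mul_sub_one_le w hx0 ht).trans (by gcongr)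

lemma mellin_exp_neg_mul_sub_one {w : ℂ} (hw : w.re ∈ Ioo (-1) 0) {z : ℂ} (hz : 0 ≤ z.re) :
    mellin (fun t : ℝ ↦ Complex.exp (-z * t) - 1) w = Complex.Gamma w * z ^ (-w) := by
  rcases eq_or_ne z 0 with rfl | hz0
  · have hw0 : w ≠ 0 := fun h ↦ hw.2.ne (by rw [h, Complex.zero_re])
    simp [mellin, hw0]
  have hslit : {z : ℂ | 0 ≤ z.re ∧ z ≠ 0} ⊆ Complex.slitPlane := fun z ⟨hz, hz0⟩ ↦
    Complex.mem_slitPlane_iff.2 (hz.lt_or_eq.imp_right fun hre him ↦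
      hz0 (Complex.ext hre.symm him))
  refine Set.EqOn.of_subset_closure (s := {z : ℂ | 0 < z.re}) (t := {z : ℂ | 0 ≤ z.re ∧ z ≠ 0})
    (f := fun z ↦ mellin (fun t : ℝ ↦ Complex.exp (-z * t) - 1) w)
    (g := fun z ↦ Complex.Gamma w * z ^ (-w))
    (fun z hz ↦ mellin_exp_neg_mul_sub_one_of_re_pos hw hz)
    ((continuousOn_mellin_exp_neg_mul_sub_one hw).mono fun z hz ↦ hz.1)
    (fun z hz ↦ ?_) (fun z (hz : 0 < z.re) ↦ ⟨hz.le, ?_⟩) (fun z hz ↦ ?_) ⟨hz, hz0⟩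
  · exact (continuousAt_cpow_const (hslit hz)).const_mul _ |>.continuousWithinAt
  · exact fun h ↦ hz.ne' (by rw [h, Complex.zero_re])
  · rw [Complex.closure_setOfPred_lt_re]
    exact hz.1

lemma hasSum_mellin_of_summable_integral_norm {ι : Type*} [Countable ι] {F : ι → ℝ → ℂ}
    {f : ℝ → ℂ} {w : ℂ} (hF : ∀ i, MellinConvergent (F i) w)
    (hF' : Summable fun i ↦ ∫ t in Ioi (0 : ℝ), ‖(t : ℂ) ^ (w - 1) • F i t‖)
    (hf : ∀ t ∈ Ioi (0 : ℝ), HasSum (F · t) (f t)) :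
    HasSum (fun i ↦ mellin (F i) w) (mellin f w) := by
  have hswap := hasSum_integral_of_summable_integral_norm hF hF'
  rwa [setIntegral_congr_fun measurableSet_Ioi
    fun t ht ↦ ((hf t ht).const_smul ((t : ℂ) ^ (w - 1))).tsum_eq] at hswap

lemma hasSum_mellin_exp_neg_mul_sub_one {ι : Type*} [Countable ι] {c z : ι → ℂ} {f : ℝ → ℂ}
    {w : ℂ} (hw : w.re ∈ Ioo (-1) 0) (hz : ∀ i, 0 ≤ (z i).re)
    (hc : Summable fun i ↦ ‖c i‖ * ‖z i‖ ^ (-w.re))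
    (hf : ∀ t ∈ Ioi (0 : ℝ), HasSum (fun i ↦ c i * (Complex.exp (-z i * t) - 1)) (f t)) :
    HasSum (fun i ↦ c i * (Complex.Gamma w * z i ^ (-w))) (mellin f w) := by
  have hmellin (i : ι) : mellin (fun t : ℝ ↦ c i * (Complex.exp (-z i * t) - 1)) w =
      c i * (Complex.Gamma w * z i ^ (-w)) := by
    rw [← mellin_exp_neg_mul_sub_one hw (hz i)]
    exact mellin_const_smul _ _ (c i)
  simp only [← hmellin]
  refine hasSum_mellin_of_summable_integral_norm
    (fun i ↦ (mellinConvergent_exp_neg_mul_sub_one hw (hz i)).const_smul (c i)) ?_ hf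
  set M := ∫ t in Ioi (0 : ℝ), t ^ (w.re - 1) * min 1 t
  refine (hc.mul_right (2 * M)).of_nonneg_of_le
    (fun i ↦ integral_nonneg fun t ↦ norm_nonneg _) fun i ↦ ?_
  calc ∫ t in Ioi (0 : ℝ), ‖(t : ℂ) ^ (w - 1) • (c i * (Complex.exp (-z i * t) - 1))‖
      = ‖c i‖ * ∫ t in Ioi (0 : ℝ), ‖(t : ℂ) ^ (w - 1) • (Complex.exp (-z i * t) - 1)‖ := by
        rw [← integral_const_mul]
        congr 1 with t
        rw [smul_eq_mul, mul_left_comm, norm_mul, smul_eq_mul]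
    _ ≤ ‖c i‖ * (2 * (‖z i‖ ^ (-w.re) * M)) := by
        gcongr
        exact integral_norm_cpow_mul_exp_neg_mul_sub_one_le hw (hz i)
    _ = ‖c i‖ * ‖z i‖ ^ (-w.re) * (2 * M) := by ring

/-! ### Mellin transform of the periodized Bernoulli functions -/

lemma ofReal_mul_cpow {r : ℝ} (hr : 0 < r) {z : ℂ} (hz : z ≠ 0) (s : ℂ) :
    ((r : ℂ) * z) ^ s = (r : ℂ) ^ s * z ^ s := by
  rw [Complex.cpow_def_of_ne_zero (mul_ne_zero (Complex.ofReal_ne_zero.2 hr.ne') hz),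
    Complex.cpow_def_of_ne_zero (Complex.ofReal_ne_zero.2 hr.ne'), Complex.cpow_def_of_ne_zero hz,
    Complex.log_ofReal_mul hr hz, add_mul, Complex.exp_add, Complex.ofReal_log hr.le]

lemma two_pi_I_cpow (s : ℂ) :
    (2 * π * Complex.I) ^ s = (2 * π) ^ s * Complex.exp (π * Complex.I * s / 2) := by
  have h := ofReal_mul_cpow Real.two_pi_pos Complex.I_ne_zero s
  rw [Complex.cpow_def_of_ne_zero Complex.I_ne_zero, Complex.log_I] at h
  push_cast at h
  rw [h]
  ring_nf

lemma neg_two_pi_I_cpow (s : ℂ) :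
    (-(2 * π * Complex.I)) ^ s = (2 * π) ^ s * Complex.exp (-π * Complex.I * s / 2) := by
  have h := ofReal_mul_cpow Real.two_pi_pos (neg_ne_zero.2 Complex.I_ne_zero) s
  rw [Complex.cpow_def_of_ne_zero (neg_ne_zero.2 Complex.I_ne_zero), Complex.log_neg_I] at h
  push_cast at h
  rw [← mul_neg, h]
  ring_nf

lemma hasSum_mul_natCast_cpow_mul_fourier {s : ℂ} (hs : 1 < s.re) {z : ℂ} (hz : z ≠ 0) (x : ℝ) :
    HasSum (fun n : ℕ ↦ (z * n) ^ (-s) * fourier n (x : UnitAddCircle))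
      (z ^ (-s) * expZeta x s) := by
  have hs0 : s ≠ 0 := fun h ↦ by norm_num [h] at hs
  refine ((hasSum_expZeta_of_one_lt_re x hs).mul_left (z ^ (-s))).congr_fun fun n ↦ ?_
  rcases n.eq_zero_or_pos with rfl | hn
  · simp [hs0]
  · have hmul := ofReal_mul_cpow (Nat.cast_pos.2 hn) hz (-s)
    rw [Complex.ofReal_natCast, Complex.cpow_neg (n : ℂ)] at hmul
    rw [mul_comm z, hmul, fourier_coe_apply, Complex.ofReal_one, div_one, Int.cast_natCast,
      mul_right_comm _ (n : ℂ)]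
    ring

lemma hasSum_two_pi_I_mul_cpow_mul_fourier {s : ℂ} (hs : 1 < s.re) (x : ℝ) :
    HasSum (fun n : ℤ ↦ (2 * π * Complex.I * n) ^ (-s) * fourier n (x : UnitAddCircle))
      (hurwitzZeta x (1 - s) / Complex.Gamma s) := by
  have hs0 : s ≠ 0 := fun h ↦ by norm_num [h] at hs
  have hs1 : s ≠ 1 := fun h ↦ by norm_num [h] at hs
  have hsn (n : ℕ) : s ≠ -n := fun h ↦ by
    rw [h, Complex.neg_re, Complex.natCast_re] at hs
    linarith [n.cast_nonneg (α := ℝ)]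
  have hpos := hasSum_mul_natCast_cpow_mul_fourier hs Complex.two_pi_I_ne_zero x
  have hneg := hasSum_mul_natCast_cpow_mul_fourier hs (neg_ne_zero.2 Complex.two_pi_I_ne_zero) (-x)
  have hsum := HasSum.of_nat_of_neg (f := fun n : ℤ ↦ (2 * π * Complex.I * n) ^ (-s) *
    fourier n (x : UnitAddCircle)) (by simpa using hpos) (by simpa using hneg)
  suffices hurwitzZeta x (1 - s) / Complex.Gamma s = (2 * π * Complex.I) ^ (-s) * expZeta x s +
      (-(2 * π * Complex.I)) ^ (-s) * expZeta (-x : ℝ) s by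
    rw [this]
    simpa [hs0] using hsum
  rw [hurwitzZeta_one_sub _ hsn (Or.inr hs1), two_pi_I_cpow, neg_two_pi_I_cpow, mul_right_comm,
    mul_div_cancel_right₀ _ (Complex.Gamma_ne_zero hsn), AddCircle.coe_neg]
  ring_nf

lemma periodizedBernoulli_coe {k : ℕ} (hk : k ≠ 1) {x : ℝ} (hx : x ∈ Icc 0 1) :
    periodizedBernoulli k (x : UnitAddCircle) = bernoulliFun k x := by
  have hIco {y : ℝ} (hy : y ∈ Ico 0 1) :
      periodizedBernoulli k (y : UnitAddCircle) = bernoulliFun k y :=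
    AddCircle.liftIco_coe_apply (by rwa [zero_add])
  rcases hx.2.lt_or_eq with h | rfl
  · exact hIco ⟨hx.1, h⟩
  · rw [bernoulliFun_endpoints_eq_of_ne_one hk, ← hIco ⟨le_rfl, one_pos⟩, AddCircle.coe_period,
      AddCircle.coe_zero]

lemma hasSum_periodizedBernoulli {k : ℕ} (hk : 2 ≤ k) (y : UnitAddCircle) :
    HasSum (fun n : ℤ ↦ -(k.factorial : ℂ) / (2 * π * Complex.I * n) ^ k * fourier n y)
      (periodizedBernoulli k y) := by
  let f : C(UnitAddCircle, ℂ) :=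
    ⟨(↑) ∘ periodizedBernoulli k,
      Complex.continuous_ofReal.comp (periodizedBernoulli.continuous (by lia))⟩
  have hcoeff : fourierCoeff f = fun n : ℤ ↦ -k.factorial / (2 * π * Complex.I * n) ^ k :=
    funext fun n ↦ fourierCoeff_bernoulli_eq (by lia) n
  have hsum := has_pointwise_sum_fourier_series_of_summable
    (hcoeff ▸ summable_bernoulli_fourier hk) y
  rwa [hcoeff] at hsum

lemma fourier_coe_sub (n : ℤ) (x t : ℝ) :
    fourier n ((x - t : ℝ) : UnitAddCircle) =
      fourier n (x : UnitAddCircle) * Complex.exp (-(2 * π * Complex.I * n) * t) := by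
  rw [fourier_coe_apply, fourier_coe_apply, ← Complex.exp_add]
  push_cast
  ring_nf

lemma hasSum_periodizedBernoulli_sub {k : ℕ} (hk : 2 ≤ k) (x t : ℝ) :
    HasSum (fun n : ℤ ↦ -(k.factorial : ℂ) / (2 * π * Complex.I * n) ^ k *
        fourier n (x : UnitAddCircle) * (Complex.exp (-(2 * π * Complex.I * n) * t) - 1))
      ((periodizedBernoulli k ((x - t : ℝ) : UnitAddCircle) -
        periodizedBernoulli k (x : UnitAddCircle) : ℝ) : ℂ) := by
  push_cast
  refine ((hasSum_periodizedBernoulli hk _).sub (hasSum_periodizedBernoulli hk _)).congr_fun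
    fun n ↦ ?_
  rw [fourier_coe_sub]
  ring

lemma summable_norm_periodizedBernoulli_coeff_mul_rpow {k : ℕ} (hk : k ≠ 0) {r : ℝ}
    (hr : 1 < k + r) (x : ℝ) :
    Summable fun n : ℤ ↦ ‖-(k.factorial : ℂ) / (2 * π * Complex.I * n) ^ k *
      fourier n (x : UnitAddCircle)‖ * ‖2 * π * Complex.I * n‖ ^ (-r) := by
  refine ((Real.summable_abs_int_rpow hr).mul_left (k.factorial * (2 * π) ^ (-(k + r)))).congr
    fun n ↦ ?_
  have hnorm : ‖2 * π * Complex.I * n‖ = 2 * π * |(n : ℝ)| := by simp [abs_of_pos Real.pi_pos]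
  rw [norm_mul, fourier_apply, Circle.norm_coe, mul_one, norm_div, norm_neg, norm_pow,
    Complex.norm_natCast, hnorm]
  rcases eq_or_ne n 0 with rfl | hn
  · have hexp : -r + -(k : ℝ) ≠ 0 := by linarith
    simp [hk, Real.zero_rpow hexp]
  · have hn' : 0 < |(n : ℝ)| := abs_pos.2 (Int.cast_ne_zero.2 hn)
    rw [mul_assoc, ← Real.mul_rpow Real.two_pi_pos.le hn'.le, neg_add,
      Real.rpow_add (by positivity), Real.rpow_neg (by positivity), Real.rpow_natCast]
    ring

lemma mellin_periodizedBernoulli_sub {k : ℕ} (hk : 2 ≤ k) {w : ℂ} (hw : w.re ∈ Ioo (-1) 0)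
    (x : ℝ) :
    mellin (fun t : ℝ ↦ ((periodizedBernoulli k ((x - t : ℝ) : UnitAddCircle) -
        periodizedBernoulli k (x : UnitAddCircle) : ℝ) : ℂ)) w =
      -k.factorial * Complex.Gamma w * (hurwitzZeta x (1 - (k + w)) / Complex.Gamma (k + w)) := by
  have hk' : (2 : ℝ) ≤ k := mod_cast hk
  have hre : 1 < (k + w).re := by
    rw [Complex.add_re, Complex.natCast_re]
    linarith [hw.1]
  have hterms := hasSum_mellin_exp_neg_mul_sub_one hw
    (z := fun n : ℤ ↦ 2 * π * Complex.I * n) (fun n ↦ by simp)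
    (summable_norm_periodizedBernoulli_coeff_mul_rpow (by lia) (by linarith [hw.1]) x)
    fun t _ ↦ hasSum_periodizedBernoulli_sub hk x t
  refine hterms.unique (((hasSum_two_pi_I_mul_cpow_mul_fourier hre x).mul_left
    (-k.factorial * Complex.Gamma w)).congr_fun fun n ↦ ?_)
  rcases eq_or_ne n 0 with rfl | hn
  · have hexp : -w + -(k : ℂ) ≠ 0 := fun h ↦ by
      rw [show k + w = 0 by linear_combination -h] at hre
      norm_num at hre
    simp [hexp, show k ≠ 0 by lia]
  · have hz : 2 * π * Complex.I * n ≠ 0 :=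
      mul_ne_zero Complex.two_pi_I_ne_zero (Int.cast_ne_zero.2 hn)
    rw [neg_add, Complex.cpow_add _ _ hz, Complex.cpow_neg _ (k : ℂ), Complex.cpow_natCast]
    ring

lemma continuous_periodizedBernoulli_sub {k : ℕ} (hk : k ≠ 1) (a : ℝ) :
    Continuous fun t : ℝ ↦ periodizedBernoulli k ((a - t : ℝ) : UnitAddCircle) -
      periodizedBernoulli k (a : UnitAddCircle) :=
  ((periodizedBernoulli.continuous hk).comp
    ((AddCircle.continuous_mk' 1).comp (continuous_const.sub continuous_id))).sub continuous_const

lemma periodizedBernoulli_sub_isBigO_one {k : ℕ} (hk : k ≠ 1) (a : ℝ) (l : Filter ℝ) :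
    (fun t : ℝ ↦ periodizedBernoulli k ((a - t : ℝ) : UnitAddCircle) -
      periodizedBernoulli k (a : UnitAddCircle)) =O[l] fun _ ↦ (1 : ℝ) := by
  obtain ⟨C, hC⟩ := isCompact_univ.exists_bound_of_continuousOn
    (periodizedBernoulli.continuous hk).continuousOn
  refine IsBigO.of_bound (C + C) (Eventually.of_forall fun t ↦ ?_)
  rw [norm_one, mul_one]
  exact (norm_sub_le _ _).trans (add_le_add (hC _ (mem_univ _)) (hC _ (mem_univ _)))

lemma periodizedBernoulli_sub_isBigO_id {k : ℕ} (hk : k ≠ 1) {a : ℝ} (ha : a ∈ Ioc 0 1) :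
    (fun t : ℝ ↦ periodizedBernoulli k ((a - t : ℝ) : UnitAddCircle) -
      periodizedBernoulli k (a : UnitAddCircle)) =O[𝓝[>] 0] fun t ↦ t := by
  have hderiv : HasDerivAt (fun t : ℝ ↦ bernoulliFun k (a - t))
      (k * bernoulliFun (k - 1) a * -1) 0 := by
    have h : HasDerivAt (bernoulliFun k) (k * bernoulliFun (k - 1) a) (a - id 0) := by
      simpa using hasDerivAt_bernoulliFun k a
    exact h.comp 0 ((hasDerivAt_id 0).const_sub a)
  refine (hderiv.isBigO_sub.mono nhdsWithin_le_nhds).congr' ?_ (by simp)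
  filter_upwards [Ioo_mem_nhdsGT ha.1] with t ht
  rw [sub_zero, periodizedBernoulli_coe hk ⟨by linarith [ht.2], by linarith [ht.1, ha.2]⟩,
    periodizedBernoulli_coe hk (Ioc_subset_Icc_self ha)]

lemma integrableOn_rpow_mul_periodizedBernoulli_sub {k : ℕ} (hk : k ≠ 1) {r : ℝ}
    (hr : r ∈ Ioo (-1) 0) {a : ℝ} (ha : a ∈ Ioc 0 1) :
    IntegrableOn (fun t : ℝ ↦ t ^ (r - 1) *
      (periodizedBernoulli k ((a - t : ℝ) : UnitAddCircle) -
        periodizedBernoulli k (a : UnitAddCircle))) (Ioi 0) := by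
  refine mellin_convergent_of_isBigO_scalar (a := 0) (b := -1)
    ((continuous_periodizedBernoulli_sub hk a).continuousOn.locallyIntegrableOn measurableSet_Ioi)
    ?_ hr.2 ?_ hr.1
  · simpa only [neg_zero, Real.rpow_zero] using periodizedBernoulli_sub_isBigO_one hk a atTop
  · simpa only [neg_neg, Real.rpow_one] using periodizedBernoulli_sub_isBigO_id hk ha

lemma mellin_ofReal (f : ℝ → ℝ) (r : ℝ) :
    mellin (fun t ↦ (f t : ℂ)) r = ((∫ t in Ioi (0 : ℝ), t ^ (r - 1) * f t : ℝ) : ℂ) := by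
  rw [mellin, ← integral_complex_ofReal]
  refine setIntegral_congr_fun measurableSet_Ioi fun t (ht : 0 < t) ↦ ?_
  simp [Complex.ofReal_cpow ht.le]

lemma Gamma_neg_of_mem_Ioo {r : ℝ} (hr : r ∈ Ioo (-1) 0) : Real.Gamma r < 0 := by
  have h := Real.Gamma_pos_of_pos (show 0 < r + 1 by linarith [hr.1])
  rw [Real.Gamma_add_one hr.2.ne] at h
  exact neg_of_mul_pos_right h hr.2.le

lemma hurwitzZeta_one_sub_eq_integral {k : ℕ} (hk : 2 ≤ k) {r : ℝ} (hr : r ∈ Ioo (-1) 0) (x : ℝ) :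
    hurwitzZeta x ((1 - (k + r) : ℝ) : ℂ) =
      ((-Real.Gamma (k + r) / (k.factorial * Real.Gamma r) *
        ∫ t in Ioi (0 : ℝ), t ^ (r - 1) * (periodizedBernoulli k ((x - t : ℝ) : UnitAddCircle) -
          periodizedBernoulli k (x : UnitAddCircle)) : ℝ) : ℂ) := by
  have hmellin := mellin_periodizedBernoulli_sub hk (w := r) (by simpa using hr) x
  have hk' : (2 : ℝ) ≤ k := mod_cast hk
  have hGamma : (Real.Gamma (k + r) : ℂ) ≠ 0 :=
    Complex.ofReal_ne_zero.2 (Real.Gamma_pos_of_pos (by linarith [hr.1])).ne'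
  have hGamma' : (Real.Gamma r : ℂ) ≠ 0 := Complex.ofReal_ne_zero.2 (Gamma_neg_of_mem_Ioo hr).ne
  have hfact : (k.factorial : ℂ) ≠ 0 := Nat.cast_ne_zero.2 k.factorial_ne_zero
  rw [mellin_ofReal, ← Complex.ofReal_natCast k, ← Complex.ofReal_add, Complex.Gamma_ofReal,
    Complex.Gamma_ofReal, ← Complex.ofReal_one, ← Complex.ofReal_sub] at hmellin
  rw [Complex.ofReal_mul, hmellin]
  push_cast
  field_simp

/-! ### Values at nonpositive integers -/

lemma hasMellin_const_smul_cpow_Ioc (c : ℂ) {b : ℝ} {w : ℂ} (hw : b < w.re) :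
    HasMellin (indicator (Ioc 0 1) fun t : ℝ ↦ c • (t : ℂ) ^ (-b : ℂ)) w (c / (w - b)) := by
  have hcpow := hasMellin_cpow_Ioc (-b) (s := w) (by simpa using hw)
  have h := hasMellin_const_smul hcpow.1 c
  rw [hcpow.2, smul_eq_mul, mul_one_div, ← sub_eq_add_neg] at h
  rwa [indicator_const_smul (Ioc 0 1) c fun t : ℝ ↦ (t : ℂ) ^ (-b : ℂ)]

lemma locallyIntegrableOn_indicator_Ioc_const_smul_cpow (b c : ℂ) :
    LocallyIntegrableOn (indicator (Ioc 0 1) fun t : ℝ ↦ c • (t : ℂ) ^ b) (Ioi 0) := by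
  refine LocallyIntegrableOn.mono (f := fun t : ℝ ↦ c • (t : ℂ) ^ b)
    (ContinuousOn.locallyIntegrableOn (fun t ht ↦ ?_) measurableSet_Ioi)
    (Measurable.aestronglyMeasurable (by measurability))
    (Eventually.of_forall fun t ↦ norm_indicator_le_norm_self _ _)
  exact ((Complex.continuousAt_ofReal_cpow_const t b (Or.inr ht.ne')).const_smul
    c).continuousWithinAt

lemma tendsto_sub_mul_mellin_nhdsWithin {f : ℝ → ℂ} {c : ℂ} {a b b' : ℝ}
    (hfc : LocallyIntegrableOn f (Ioi 0)) (hf_top : f =O[atTop] (· ^ (-a))) (hab : b < a)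
    (hf_bot : (fun t : ℝ ↦ f t - c * (t : ℂ) ^ (-b : ℂ)) =O[𝓝[>] 0] (· ^ (-b'))) (hb : b' < b) :
    Tendsto (fun w : ℂ ↦ (w - b) * mellin f w) (𝓝[{w | b < w.re}] b) (𝓝 c) := by
  -- Subtracting the leading term near `0`, cut off at `1`, removes the pole at `b`.
  let g : ℝ → ℂ := indicator (Ioc 0 1) fun t : ℝ ↦ c • (t : ℂ) ^ (-b : ℂ)
  have hgc : LocallyIntegrableOn g (Ioi 0) :=
    locallyIntegrableOn_indicator_Ioc_const_smul_cpow (-b) c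
  have hg_top : g =ᶠ[atTop] 0 := by
    filter_upwards [eventually_gt_atTop 1] with t ht
    exact indicator_of_notMem (fun h ↦ ht.not_ge h.2) _
  have hg_bot : g =ᶠ[𝓝[>] 0] fun t ↦ c * (t : ℂ) ^ (-b : ℂ) := by
    filter_upwards [Ioc_mem_nhdsGT one_pos] with t ht
    exact indicator_of_mem ht _
  have hsub_top : (f - g) =O[atTop] (· ^ (-a)) :=
    hf_top.congr' (hg_top.mono fun t ht ↦ by simp [ht]) .rfl
  have hsub_bot : (f - g) =O[𝓝[>] 0] (· ^ (-b')) :=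
    hf_bot.congr' (hg_bot.mono fun t ht ↦ by simp [ht]) .rfl
  have hlim : Tendsto (fun w : ℂ ↦ (w - b) * mellin (f - g) w + c) (𝓝 b) (𝓝 c) := by
    have hcont := (mellin_differentiableAt_of_isBigO_rpow (s := b) (hfc.sub hgc) hsub_top
      (by simpa) hsub_bot (by simpa)).continuousAt
    have h : ContinuousAt (fun w : ℂ ↦ (w - b) * mellin (f - g) w + c) b := by fun_prop
    simpa [ContinuousAt] using h
  refine (hlim.mono_left nhdsWithin_le_nhds).congr' ?_
  have hre : ∀ᶠ w : ℂ in 𝓝 (b : ℂ), w.re < a :=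
    Complex.continuous_re.continuousAt.eventually_lt_const (by simpa)
  filter_upwards [nhdsWithin_le_nhds hre, self_mem_nhdsWithin] with w hwa (hwb : b < w.re)
  have hg := hasMellin_const_smul_cpow_Ioc c hwb
  have hadd := (hasMellin_add (mellinConvergent_of_isBigO_rpow (hfc.sub hgc) hsub_top hwa hsub_bot
    (hb.trans hwb)) hg.1).2
  have hwb' : w - b ≠ 0 := sub_ne_zero.2 fun h ↦ by simp [h] at hwb
  simp only [Pi.sub_apply, sub_add_cancel, hg.2, g] at hadd
  rw [hadd, mul_add, mul_div_cancel₀ _ hwb']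

lemma periodizedBernoulli_two_sub_isBigO {a : ℝ} (ha : a ∈ Ioc 0 1) :
    (fun t : ℝ ↦ periodizedBernoulli 2 ((a - t : ℝ) : UnitAddCircle) -
      periodizedBernoulli 2 (a : UnitAddCircle) - (1 - 2 * a) * t) =O[𝓝[>] 0]
        fun t ↦ t ^ (2 : ℝ) := by
  refine (isBigO_refl (fun t : ℝ ↦ t ^ (2 : ℝ)) _).congr' ?_ .rfl
  filter_upwards [Ioo_mem_nhdsGT ha.1] with t ht
  rw [periodizedBernoulli_coe (by norm_num) ⟨by linarith [ht.2], by linarith [ht.1, ha.2]⟩,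
    periodizedBernoulli_coe (by norm_num) (Ioc_subset_Icc_self ha), bernoulliFun_two,
    bernoulliFun_two, Real.rpow_two]
  ring

lemma hurwitzZeta_neg_one_sub_eq_mellin {w : ℂ} (hw : w.re ∈ Ioo (-1) 0) (x : ℝ) :
    hurwitzZeta x (-1 - w) = -(w / 2) * ((w + 1) *
      mellin (fun t : ℝ ↦ ((periodizedBernoulli 2 ((x - t : ℝ) : UnitAddCircle) -
        periodizedBernoulli 2 (x : UnitAddCircle) : ℝ) : ℂ)) w) := by
  have hw0 : w ≠ 0 := fun h ↦ hw.2.ne (by rw [h, Complex.zero_re])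
  have hw1 : w + 1 ≠ 0 := fun h ↦ hw.1.ne' (by rw [eq_neg_of_add_eq_zero_left h]; simp)
  have hGamma : Complex.Gamma w ≠ 0 := Complex.Gamma_ne_zero fun n h ↦ by
    rw [h, Complex.neg_re, Complex.natCast_re, mem_Ioo, neg_lt_neg_iff, neg_lt_zero] at hw
    norm_cast at hw
    lia
  rw [mellin_periodizedBernoulli_sub le_rfl hw,
    show (2 : ℕ) + w = w + 1 + 1 by push_cast; ring, Complex.Gamma_add_one _ hw1,
    Complex.Gamma_add_one _ hw0, show 1 - (w + 1 + 1) = -1 - w by ring, Nat.factorial_two]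
  field_simp
  norm_num

lemma tendsto_add_one_mul_mellin_periodizedBernoulli_two {a : ℝ} (ha : a ∈ Ioc 0 1) :
    Tendsto (fun w : ℂ ↦ (w + 1) *
      mellin (fun t : ℝ ↦ ((periodizedBernoulli 2 ((a - t : ℝ) : UnitAddCircle) -
        periodizedBernoulli 2 (a : UnitAddCircle) : ℝ) : ℂ)) w)
      (𝓝[{w | -1 < w.re}] (-1)) (𝓝 (1 - 2 * a)) := by
  have hcont := continuous_periodizedBernoulli_sub (k := 2) (by norm_num) a
  have htop := Complex.isBigO_ofReal_left.2
    (periodizedBernoulli_sub_isBigO_one (k := 2) (by norm_num) a atTop)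
  have hbot := Complex.isBigO_ofReal_left.2 (periodizedBernoulli_two_sub_isBigO ha)
  have h := tendsto_sub_mul_mellin_nhdsWithin (a := 0) (b := -1) (b' := -2) (c := 1 - 2 * a)
    ((Complex.continuous_ofReal.comp hcont).continuousOn.locallyIntegrableOn measurableSet_Ioi)
    (by simpa only [Function.comp_def, neg_zero, Real.rpow_zero] using htop) (by norm_num)
    (by simpa using hbot) (by norm_num)
  simpa only [Function.comp_def, Complex.ofReal_neg, Complex.ofReal_one, sub_neg_eq_add] using h

/- The formula `hurwitzZeta_neg_nat` for the values at `-k` excludes `k = 0`. -/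
lemma hurwitzZeta_apply_zero {a : ℝ} (ha : a ∈ Ioc 0 1) : hurwitzZeta a 0 = 1 / 2 - a := by
  have hne : (𝓝[{w : ℂ | -1 < w.re}] (-1)).NeBot := by
    rw [← mem_closure_iff_nhdsWithin_neBot, Complex.closure_setOfPred_lt_re]
    simp
  have hzeta : Tendsto (fun w : ℂ ↦ hurwitzZeta a (-1 - w)) (𝓝 (-1)) (𝓝 (hurwitzZeta a 0)) := by
    refine (differentiableAt_hurwitzZeta a zero_ne_one).continuousAt.tendsto.comp ?_
    exact Continuous.tendsto' (by fun_prop) _ _ (by simp)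
  have hfactor : Tendsto (fun w : ℂ ↦ -(w / 2)) (𝓝 (-1)) (𝓝 (1 / 2)) :=
    Continuous.tendsto' (by fun_prop) _ _ (by norm_num)
  have hlim := (hfactor.mono_left nhdsWithin_le_nhds).mul
    (tendsto_add_one_mul_mellin_periodizedBernoulli_two ha)
  rw [show 1 / 2 * (1 - 2 * (a : ℂ)) = 1 / 2 - a by ring] at hlim
  refine tendsto_nhds_unique' hne (hzeta.mono_left nhdsWithin_le_nhds) (hlim.congr' ?_)
  have hre : ∀ᶠ w : ℂ in 𝓝 (-1), w.re < 0 :=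
    Complex.continuous_re.continuousAt.eventually_lt_const (by simp)
  filter_upwards [nhdsWithin_le_nhds hre, self_mem_nhdsWithin] with w hw hw'
  exact (hurwitzZeta_neg_one_sub_eq_mellin ⟨hw', hw⟩ a).symm

lemma ofReal_bernoulliFun (k : ℕ) (x : ℝ) :
    (bernoulliFun k x : ℂ) = ((Polynomial.bernoulli k).map (algebraMap ℚ ℂ)).eval (x : ℂ) := by
  rw [bernoulliFun, ← Complex.coe_algebraMap, ← Polynomial.eval_map_apply, Polynomial.map_map,
    ← IsScalarTower.algebraMap_eq]

lemma hurwitzZeta_neg_natCast (k : ℕ) {a : ℝ} (ha : a ∈ Ioc 0 1) :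
    hurwitzZeta a (-k) = ((-bernoulliFun (k + 1) a / (k + 1) : ℝ) : ℂ) := by
  rcases eq_or_ne k 0 with rfl | hk
  · rw [Nat.cast_zero, neg_zero, hurwitzZeta_apply_zero ha, bernoulliFun_one]
    push_cast
    ring
  · rw [hurwitzZeta_neg_nat hk (Ioc_subset_Icc_self ha), ← ofReal_bernoulliFun]
    push_cast
    ring

lemma exists_mem_Ioo_eq_zero_of_mul_neg {f : ℝ → ℝ} {a b : ℝ} (hab : a ≤ b)
    (hf : ContinuousOn f (Icc a b)) (h : f a * f b < 0) : ∃ c ∈ Ioo a b, f c = 0 := by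
  rcases mul_neg_iff.1 h with ⟨ha, hb⟩ | ⟨ha, hb⟩
  · exact intermediate_value_Ioo' hab hf ⟨hb, ha⟩
  · exact intermediate_value_Ioo hab hf ⟨ha, hb⟩

lemma hurwitzZeta_im_eq_zero {k : ℕ} {σ : ℝ} (hσ : σ ∈ Ioo (-(k : ℝ) - 1) (-k)) (x : ℝ) :
    (hurwitzZeta x σ).im = 0 := by
  have hint := hurwitzZeta_one_sub_eq_integral (k := k + 2) (r := -(k : ℝ) - 1 - σ) (by lia)
    ⟨by linarith [hσ.2], by linarith [hσ.1]⟩ x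
  rw [show 1 - ((k + 2 : ℕ) + (-(k : ℝ) - 1 - σ)) = σ by push_cast; ring] at hint
  rw [hint, Complex.ofReal_im]

lemma exists_hurwitzZeta_eq_zero_of_bernoulliFun_mul_neg {k : ℕ} {a : ℝ} (ha : a ∈ Ioc 0 1)
    (h : bernoulliFun (k + 1) a * bernoulliFun (k + 2) a < 0) :
    ∃ σ ∈ Ioo (-(k : ℝ) - 1) (-k), hurwitzZeta a (σ : ℂ) = 0 := by
  have hcont : ContinuousOn (fun σ : ℝ ↦ (hurwitzZeta a σ).re) (Icc (-(k : ℝ) - 1) (-k)) := by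
    intro σ hσ
    have hσ1 : (σ : ℂ) ≠ 1 :=
      Complex.ofReal_ne_one.2 (by linarith [hσ.2, k.cast_nonneg (α := ℝ)])
    exact (Complex.continuous_re.continuousAt.comp ((differentiableAt_hurwitzZeta a
      hσ1).continuousAt.comp Complex.continuous_ofReal.continuousAt)).continuousWithinAt
  have hright : (hurwitzZeta a (-(k : ℝ) : ℝ)).re = -bernoulliFun (k + 1) a / (k + 1) := by
    rw [← Complex.ofReal_re (-bernoulliFun (k + 1) a / (k + 1)), ← hurwitzZeta_neg_natCast k ha]
    simp
  have hleft : (hurwitzZeta a (-(k : ℝ) - 1 : ℝ)).re = -bernoulliFun (k + 2) a / (k + 2) := by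
    have hvalue := congrArg Complex.re (hurwitzZeta_neg_natCast (k + 1) ha)
    rwa [Complex.ofReal_re, show -((k + 1 : ℕ) : ℂ) = (-(k : ℝ) - 1 : ℝ) by push_cast; ring,
      show ((k + 1 : ℕ) : ℝ) + 1 = k + 2 by push_cast; ring] at hvalue
  obtain ⟨σ, hσ, hre⟩ := exists_mem_Ioo_eq_zero_of_mul_neg (by linarith) hcont (by
    simp only [hleft, hright]
    rw [div_mul_div_comm, neg_mul_neg, mul_comm (bernoulliFun _ _)]
    exact div_neg_of_neg_of_pos h (by positivity))
  exact ⟨σ, hσ, Complex.ext hre (hurwitzZeta_im_eq_zero hσ a)⟩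

/-! ### Signs of Bernoulli polynomials -/

lemma bernoulliFun_odd_zero {k : ℕ} (hk : Odd k) (hk1 : k ≠ 1) : bernoulliFun k 0 = 0 := by
  have h := bernoulliFun_eval_one_sub (k := k) (x := 0)
  rw [sub_zero, bernoulliFun_endpoints_eq_of_ne_one hk1, hk.neg_one_pow] at h
  linarith

lemma strictAntiOn_neg_one_pow_mul_bernoulliFun_of_pos {j : ℕ}
    (hj : ∀ x ∈ Ioo (0 : ℝ) (1 / 2), 0 < (-1) ^ (j + 1) * bernoulliFun (2 * j + 1) x) :
    StrictAntiOn (fun x ↦ (-1) ^ j * bernoulliFun (2 * j + 2) x) (Icc 0 (1 / 2)) := by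
  have hderiv (x : ℝ) : HasDerivAt (fun x ↦ (-1) ^ j * bernoulliFun (2 * j + 2) x)
      ((-1) ^ j * ((2 * j + 2 : ℕ) * bernoulliFun (2 * j + 1) x)) x :=
    (hasDerivAt_bernoulliFun (2 * j + 2) x).const_mul _
  refine strictAntiOn_of_deriv_neg (convex_Icc _ _)
    (fun x _ ↦ (hderiv x).continuousAt.continuousWithinAt) fun x hx ↦ ?_
  rw [interior_Icc] at hx
  have hpos := mul_pos (Nat.cast_pos.2 (2 * j + 1).succ_pos : (0 : ℝ) < (2 * j + 2 : ℕ)) (hj x hx)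
  rw [(hderiv x).deriv]
  rw [pow_succ] at hpos
  linarith

lemma neg_one_pow_mul_bernoulliFun_odd_pos (j : ℕ) {x : ℝ} (hx : x ∈ Ioo (0 : ℝ) (1 / 2)) :
    0 < (-1) ^ (j + 1) * bernoulliFun (2 * j + 1) x := by
  induction j generalizing x with
  | zero =>
    rw [zero_add, pow_one, mul_zero, zero_add, bernoulliFun_one]
    linarith [hx.2]
  | succ j ih =>
    have hderiv (x : ℝ) : HasDerivAt (fun x ↦ (-1) ^ j * bernoulliFun (2 * j + 3) x)
        ((2 * j + 3 : ℕ) * ((-1) ^ j * bernoulliFun (2 * j + 2) x)) x := by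
      rw [mul_left_comm]
      exact (hasDerivAt_bernoulliFun (2 * j + 3) x).const_mul _
    have hanti := strictAntiOn_neg_one_pow_mul_bernoulliFun_of_pos fun x ↦ ih
    have hconcave : StrictConcaveOn ℝ (Icc 0 (1 / 2))
        fun x ↦ (-1) ^ j * bernoulliFun (2 * j + 3) x := by
      refine StrictAntiOn.strictConcaveOn_of_deriv (convex_Icc _ _)
        (fun x _ ↦ (hderiv x).continuousAt.continuousWithinAt) ?_
      rw [interior_Icc, funext fun x ↦ (hderiv x).deriv]
      exact fun x hx y hy hxy ↦ mul_lt_mul_of_pos_left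
        (hanti (Ioo_subset_Icc_self hx) (Ioo_subset_Icc_self hy) hxy) (by positivity)
    have hlt := hconcave.lt_on_openSegment (left_mem_Icc.2 (by norm_num))
      (right_mem_Icc.2 (by norm_num)) (by norm_num) (by rwa [openSegment_eq_Ioo one_half_pos])
    have hzero : bernoulliFun (2 * j + 3) 0 = 0 := bernoulliFun_odd_zero ⟨j + 1, by ring⟩ (by lia)
    have hhalf : bernoulliFun (2 * j + 3) (1 / 2) = 0 :=
      one_div (2 : ℝ) ▸ bernoulliFun_eval_half_eq_zero (j + 1)
    rw [hzero, hhalf, mul_zero, min_self] at hlt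
    rwa [pow_succ, pow_succ, mul_neg_one, mul_neg_one, neg_neg]

lemma strictAntiOn_neg_one_pow_mul_bernoulliFun (j : ℕ) :
    StrictAntiOn (fun x ↦ (-1) ^ j * bernoulliFun (2 * j + 2) x) (Icc 0 (1 / 2)) :=
  strictAntiOn_neg_one_pow_mul_bernoulliFun_of_pos fun _ ↦ neg_one_pow_mul_bernoulliFun_odd_pos j

/-! ### Integrals of cosine-like functions against decreasing weights -/

lemma intervalIntegral_mul_pos_of_single_crossing {E v : ℝ → ℝ} {a b τ : ℝ} (hτ : τ ∈ Ioc a b)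
    (hpos : ∀ t ∈ Ioo a τ, 0 < E t) (hneg : ∀ t ∈ Icc τ b, E t ≤ 0)
    (hE : IntervalIntegrable E volume a b) (hmean : 0 ≤ ∫ t in a..b, E t)
    (hv : StrictAntiOn v (Ioc a b)) (hvτ : 0 ≤ v τ)
    (hvE : IntervalIntegrable (fun t ↦ v t * E t) volume a b) :
    0 < ∫ t in a..b, v t * E t := by
  -- Replacing `v` by `v - v τ` makes both factors change sign at `τ`.
  let g : ℝ → ℝ := fun t ↦ (v t - v τ) * E t
  have hg : IntervalIntegrable g volume a b := by
    simpa only [g, sub_mul] using hvE.sub (hE.const_mul (v τ))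
  have hga : IntervalIntegrable g volume a τ :=
    hg.mono_set (uIcc_subset_uIcc_left (Icc_subset_uIcc (Ioc_subset_Icc_self hτ)))
  have hgb : IntervalIntegrable g volume τ b :=
    hg.mono_set (uIcc_subset_uIcc_right (Icc_subset_uIcc (Ioc_subset_Icc_self hτ)))
  have hleft : 0 < ∫ t in a..τ, g t :=
    intervalIntegral.intervalIntegral_pos_of_pos_on hga (fun t ht ↦
      mul_pos (sub_pos.2 (hv ⟨ht.1, ht.2.le.trans hτ.2⟩ hτ ht.2)) (hpos t ht)) hτ.1
  have hright : 0 ≤ ∫ t in τ..b, g t :=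
    intervalIntegral.integral_nonneg hτ.2 fun t ht ↦
      mul_nonneg_of_nonpos_of_nonpos
        (sub_nonpos.2 (hv.antitoneOn hτ ⟨hτ.1.trans_le ht.1, ht.2⟩ ht.1)) (hneg t ht)
  have hsplit : ∫ t in a..b, v t * E t = (∫ t in a..b, g t) + v τ * ∫ t in a..b, E t := by
    simp only [g, sub_mul]
    rw [intervalIntegral.integral_sub hvE (hE.const_mul (v τ)),
      intervalIntegral.integral_const_mul, sub_add_cancel]
  rw [hsplit, ← intervalIntegral.integral_add_adjacent_intervals hga hgb]
  positivity

lemma setIntegral_Ioi_mul_pos_of_periodic {E w : ℝ → ℝ} (hE : Function.Periodic E 1) {τ : ℝ}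
    (hτ : τ ∈ Ioc 0 1) (hpos : ∀ t ∈ Ioo 0 τ, 0 < E t) (hneg : ∀ t ∈ Icc τ 1, E t ≤ 0)
    (hint : IntervalIntegrable E volume 0 1) (hmean : 0 ≤ ∫ t in 0..1, E t)
    (hw : StrictAntiOn w (Ioi 0)) (hw0 : ∀ t, 0 < t → 0 ≤ w t)
    (hwE : IntegrableOn (fun t ↦ w t * E t) (Ioi 0)) :
    0 < ∫ t in Ioi 0, w t * E t := by
  have hii {x y : ℝ} (hx : 0 ≤ x) (hy : 0 ≤ y) :
      IntervalIntegrable (fun t ↦ w t * E t) volume x y :=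
    intervalIntegrable_iff.2 (hwE.mono_set fun t ht ↦ (le_min hx hy).trans_lt ht.1)
  have hperiod (n : ℕ) : 0 < ∫ t in (n : ℝ)..(n + 1 : ℕ), w t * E t := by
    have hshift : ∀ t, E (t + n) = E t := fun t ↦ by simpa using hE.nat_mul n t
    have hcomp :=
      intervalIntegral.integral_comp_add_right (fun t ↦ w t * E t) (n : ℝ) (a := 0) (b := 1)
    simp only [hshift] at hcomp
    rw [zero_add, add_comm 1] at hcomp
    rw [Nat.cast_succ, ← hcomp]
    refine intervalIntegral_mul_pos_of_single_crossing hτ hpos hneg hint hmean ?_ ?_ ?_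
    · exact fun x hx y hy hxy ↦ hw (mem_Ioi.2 (by have := hx.1; positivity))
        (mem_Ioi.2 (by have := hy.1; positivity)) (by gcongr)
    · exact hw0 _ (by have := hτ.1; positivity)
    · simpa [hshift] using (hii n.cast_nonneg (n + 1).cast_nonneg).comp_add_right (n : ℝ)
  have htendsto : Tendsto (fun n : ℕ ↦ ∫ t in (0 : ℝ)..n, w t * E t) atTop
      (𝓝 (∫ t in Ioi 0, w t * E t)) :=
    intervalIntegral_tendsto_integral_Ioi 0 hwE tendsto_natCast_atTop_atTop
  have hmono : StrictMono (fun n : ℕ ↦ ∫ t in (0 : ℝ)..n, w t * E t) := by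
    refine strictMono_nat_of_lt_succ fun n ↦ ?_
    rw [← intervalIntegral.integral_add_adjacent_intervals (hii le_rfl n.cast_nonneg)
      (hii n.cast_nonneg (n + 1).cast_nonneg)]
    exact lt_add_of_pos_right _ (hperiod n)
  have h01 := hmono zero_lt_one
  simp only [Nat.cast_zero, intervalIntegral.integral_same] at h01
  exact h01.trans_le (hmono.monotone.ge_of_tendsto htendsto 1)

/-- A continuous even function of period `1` that decreases strictly from `0` to `1 / 2`, such as
`x ↦ cos (2 * π * x)` or `(-1) ^ j` times the periodized Bernoulli function of index `2 * j + 2`. -/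
structure IsCosineLike (f : ℝ → ℝ) : Prop where
  periodic : Function.Periodic f 1
  even : Function.Even f
  continuous : Continuous f
  strictAntiOn : StrictAntiOn f (Icc 0 (1 / 2))

namespace IsCosineLike

variable {f w : ℝ → ℝ} {a t : ℝ}

lemma neg_comp_add_half (hf : IsCosineLike f) : IsCosineLike fun x ↦ -f (x + 1 / 2) := by
  have hreflect (x : ℝ) : f (x + 1 / 2) = f (1 / 2 - x) := by
    rw [← hf.periodic.sub_eq, ← hf.even]
    ring_nf
  refine ⟨fun x ↦ ?_, fun x ↦ ?_, (hf.continuous.comp (continuous_add_const _)).neg,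
    fun x hx y hy hxy ↦ ?_⟩
  · simp only [add_right_comm x 1, hf.periodic (x + 1 / 2)]
  · simp only [hreflect x, neg_add_eq_sub]
  · simp only [hreflect, neg_lt_neg_iff]
    exact hf.strictAntiOn ⟨by linarith [hy.2], by linarith [hy.1]⟩
      ⟨by linarith [hx.2], by linarith [hx.1]⟩ (by linarith)

lemma lt_sub (hf : IsCosineLike f) (ha : a ≤ 1 / 2) (ht : t ∈ Ioo 0 (2 * a)) :
    f a < f (a - t) := by
  have habs : |a - t| < a := abs_lt.2 ⟨by linarith [ht.2], by linarith [ht.1]⟩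
  have h := hf.strictAntiOn ⟨abs_nonneg _, habs.le.trans ha⟩ ⟨(abs_nonneg _).trans habs.le, ha⟩ habs
  rcases abs_choice (a - t) with heq | heq
  · rwa [heq] at h
  · rwa [heq, hf.even] at h

lemma sub_le (hf : IsCosineLike f) (ha : 0 ≤ a) (ht : t ∈ Icc (2 * a) 1) : f (a - t) ≤ f a := by
  have ha' : a ≤ 1 / 2 := by linarith [ht.1, ht.2]
  rcases le_total (t - a) (1 / 2) with h | h
  · rw [← hf.even, neg_sub]
    exact hf.strictAntiOn.antitoneOn ⟨ha, ha'⟩ ⟨by linarith [ht.1], h⟩ (by linarith [ht.1])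
  · rw [← hf.periodic]
    exact hf.strictAntiOn.antitoneOn ⟨ha, ha'⟩ ⟨by linarith [ht.2], by linarith⟩
      (by linarith [ht.2])

lemma intervalIntegral_comp_const_sub (hf : IsCosineLike f) (a : ℝ) :
    ∫ t in 0..1, f (a - t) = ∫ t in 0..1, f t := by
  have h := hf.periodic.intervalIntegral_add_eq (a - 1) 0
  rw [sub_add_cancel, zero_add] at h
  rw [intervalIntegral.integral_comp_sub_left, sub_zero, h]

lemma setIntegral_mul_sub_pos (hf : IsCosineLike f) (hw : StrictAntiOn w (Ioi 0))
    (hw0 : ∀ t, 0 < t → 0 ≤ w t) (ha : a ∈ Ioc 0 (1 / 2)) (hfa : f a ≤ ∫ t in 0..1, f t)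
    (hint : IntegrableOn (fun t ↦ w t * (f (a - t) - f a)) (Ioi 0)) :
    0 < ∫ t in Ioi 0, w t * (f (a - t) - f a) := by
  have hcont : Continuous fun t ↦ f (a - t) := hf.continuous.comp (continuous_sub_left a)
  refine setIntegral_Ioi_mul_pos_of_periodic (E := fun t ↦ f (a - t) - f a) (τ := 2 * a)
    (fun t ↦ ?_) ⟨by linarith [ha.1], by linarith [ha.2]⟩
    (fun t ht ↦ sub_pos.2 (hf.lt_sub ha.2 ht)) (fun t ht ↦ sub_nonpos.2 (hf.sub_le ha.1.le ht))
    ((hcont.sub continuous_const).intervalIntegrable 0 1) ?_ hw hw0 hint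
  · simp only [← sub_sub, hf.periodic.sub_eq]
  · rw [intervalIntegral.integral_sub (hcont.intervalIntegrable 0 1) intervalIntegrable_const,
      hf.intervalIntegral_comp_const_sub, intervalIntegral.integral_const, sub_zero, one_smul]
    exact sub_nonneg.2 hfa

lemma setIntegral_mul_sub_neg (hf : IsCosineLike f) (hw : StrictAntiOn w (Ioi 0))
    (hw0 : ∀ t, 0 < t → 0 ≤ w t) (ha : a ∈ Ioc (1 / 2) 1) (hfa : ∫ t in 0..1, f t ≤ f a)
    (hint : IntegrableOn (fun t ↦ w t * (f (a - t) - f a)) (Ioi 0)) :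
    ∫ t in Ioi 0, w t * (f (a - t) - f a) < 0 := by
  have hmean : ∫ t in 0..1, f (t + 1 / 2) = ∫ t in 0..1, f t := by
    rw [intervalIntegral.integral_comp_add_right, zero_add, add_comm,
      hf.periodic.intervalIntegral_add_eq (1 / 2) 0, zero_add]
  have hshift (t : ℝ) : w t * (-f (a - 1 / 2 - t + 1 / 2) - -f (a - 1 / 2 + 1 / 2)) =
      -(w t * (f (a - t) - f a)) := by
    rw [sub_right_comm, sub_add_cancel, sub_add_cancel]
    ring
  have hpos := hf.neg_comp_add_half.setIntegral_mul_sub_pos (a := a - 1 / 2) hw hw0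
    ⟨by linarith [ha.1], by linarith [ha.2]⟩
    (by rwa [intervalIntegral.integral_neg, hmean, sub_add_cancel, neg_le_neg_iff])
    (by simp only [hshift]; exact hint.neg)
  simp only [hshift, integral_neg] at hpos
  exact neg_pos.1 hpos

end IsCosineLike

/-! ### Zeros of the Hurwitz zeta function -/

lemma intervalIntegral_periodizedBernoulli {k : ℕ} (hk : 2 ≤ k) :
    ∫ t in (0 : ℝ)..1, periodizedBernoulli k (t : UnitAddCircle) = 0 := by
  refine (intervalIntegral.integral_congr fun t ht ↦ ?_).trans
    (integral_bernoulliFun_eq_zero (by lia : k ≠ 0))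
  rw [uIcc_of_le zero_le_one] at ht
  exact periodizedBernoulli_coe (by lia) ht

lemma periodizedBernoulli_neg {k : ℕ} (hk : k ≠ 1) (x : UnitAddCircle) :
    periodizedBernoulli k (-x) = (-1) ^ k * periodizedBernoulli k x := by
  obtain ⟨y, hy, rfl⟩ := AddCircle.coe_image_Icc_eq (1 : ℝ) 0 ▸ mem_univ x
  rw [zero_add] at hy
  have hneg : -(y : UnitAddCircle) = ((1 - y : ℝ) : UnitAddCircle) := by
    rw [AddCircle.coe_sub, AddCircle.coe_period, zero_sub]
  rw [hneg, periodizedBernoulli_coe hk ⟨sub_nonneg.2 hy.2, sub_le_self 1 hy.1⟩,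
    periodizedBernoulli_coe hk hy, bernoulliFun_eval_one_sub]

lemma isCosineLike_periodizedBernoulli (j : ℕ) :
    IsCosineLike fun x ↦ (-1) ^ j * periodizedBernoulli (2 * j + 2) (x : UnitAddCircle) := by
  have hk : 2 * j + 2 ≠ 1 := by lia
  refine ⟨fun x ↦ ?_, fun x ↦ ?_, ?_, ?_⟩
  · simp only [AddCircle.coe_add_period]
  · simp only [AddCircle.coe_neg]
    rw [periodizedBernoulli_neg hk, Even.neg_one_pow (show Even (2 * j + 2) by grind),
      one_mul]
  · exact continuous_const.mul
      ((periodizedBernoulli.continuous hk).comp (AddCircle.continuous_mk' 1))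
  · refine (strictAntiOn_neg_one_pow_mul_bernoulliFun j).congr fun x hx ↦ ?_
    simp only [periodizedBernoulli_coe hk ⟨hx.1, hx.2.trans one_half_lt_one.le⟩]

lemma strictAntiOn_rpow_Ioi {r : ℝ} (hr : r < 0) : StrictAntiOn (fun t : ℝ ↦ t ^ r) (Ioi 0) :=
  fun _ hx _ _ hxy ↦ Real.rpow_lt_rpow_of_neg hx hxy hr

lemma hurwitzZeta_one_sub_ne_zero {k : ℕ} (hk : 2 ≤ k) {r : ℝ} (hr : r ∈ Ioo (-1) 0) {x : ℝ}
    (hne : ∫ t in Ioi (0 : ℝ), t ^ (r - 1) * (periodizedBernoulli k ((x - t : ℝ) : UnitAddCircle) -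
      periodizedBernoulli k (x : UnitAddCircle)) ≠ 0) :
    hurwitzZeta x ((1 - (k + r) : ℝ) : ℂ) ≠ 0 := by
  have hk' : (2 : ℝ) ≤ k := mod_cast hk
  have hGamma : 0 < Real.Gamma (k + r) := Real.Gamma_pos_of_pos (by linarith [hr.1])
  rw [hurwitzZeta_one_sub_eq_integral hk hr]
  exact Complex.ofReal_ne_zero.2 (mul_ne_zero (div_ne_zero (neg_ne_zero.2 hGamma.ne')
    (mul_ne_zero (Nat.cast_ne_zero.2 k.factorial_ne_zero) (Gamma_neg_of_mem_Ioo hr).ne)) hne)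

lemma hurwitzZeta_ne_zero_of_bernoulliFun {j : ℕ} {σ : ℝ}
    (hσ : σ ∈ Ioo (-((2 * j : ℕ) : ℝ) - 1) (-(2 * j : ℕ))) {a : ℝ}
    (h : a ∈ Ioc 0 (1 / 2) ∧ (-1) ^ j * bernoulliFun (2 * j + 2) a ≤ 0 ∨
      a ∈ Ioc (1 / 2) 1 ∧ 0 ≤ (-1) ^ j * bernoulliFun (2 * j + 2) a) :
    hurwitzZeta a σ ≠ 0 := by
  have hk : 2 * j + 2 ≠ 1 := by lia
  have ha : a ∈ Ioc 0 1 :=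
    h.elim (fun h ↦ ⟨h.1.1, by linarith [h.1.2]⟩) fun h ↦ ⟨by linarith [h.1.1], h.1.2⟩
  obtain ⟨r, rfl⟩ : ∃ r, σ = 1 - ((2 * j + 2 : ℕ) + r) :=
    ⟨1 - (2 * j + 2 : ℕ) - σ, by ring⟩
  have hr : r ∈ Ioo (-1) 0 := by
    push_cast at hσ
    exact ⟨by linarith [hσ.2], by linarith [hσ.1]⟩
  let f : ℝ → ℝ := fun x ↦ (-1) ^ j * periodizedBernoulli (2 * j + 2) (x : UnitAddCircle)
  have hf : IsCosineLike f := isCosineLike_periodizedBernoulli j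
  have hfa : f a = (-1) ^ j * bernoulliFun (2 * j + 2) a :=
    congrArg _ (periodizedBernoulli_coe hk (Ioc_subset_Icc_self ha))
  have hmean : ∫ t in 0..1, f t = 0 := by
    rw [intervalIntegral.integral_const_mul, intervalIntegral_periodizedBernoulli (by lia),
      mul_zero]
  have hfactor (t : ℝ) : t ^ (r - 1) * (f (a - t) - f a) = (-1) ^ j * (t ^ (r - 1) *
      (periodizedBernoulli (2 * j + 2) ((a - t : ℝ) : UnitAddCircle) -
        periodizedBernoulli (2 * j + 2) (a : UnitAddCircle))) := by
    rw [← mul_sub, mul_left_comm]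
  have hint : IntegrableOn (fun t ↦ t ^ (r - 1) * (f (a - t) - f a)) (Ioi 0) := by
    simp only [hfactor]
    exact (integrableOn_rpow_mul_periodizedBernoulli_sub hk hr ha).const_mul _
  have hw : StrictAntiOn (fun t : ℝ ↦ t ^ (r - 1)) (Ioi 0) :=
    strictAntiOn_rpow_Ioi (by linarith [hr.2])
  have hw0 (t : ℝ) (ht : 0 < t) : 0 ≤ t ^ (r - 1) := Real.rpow_nonneg ht.le _
  have hne : ∫ t in Ioi 0, t ^ (r - 1) * (f (a - t) - f a) ≠ 0 := by
    rcases h with ⟨ha, h⟩ | ⟨ha, h⟩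
    · exact (hf.setIntegral_mul_sub_pos hw hw0 ha (by rwa [hfa, hmean]) hint).ne'
    · exact (hf.setIntegral_mul_sub_neg hw hw0 ha (by rwa [hfa, hmean]) hint).ne
  simp only [hfactor, integral_const_mul] at hne
  exact hurwitzZeta_one_sub_ne_zero (by lia) hr (right_ne_zero_of_mul hne)

lemma bernoulliFun_mul_neg_of_lt_half {j : ℕ} {a : ℝ} (ha : a ∈ Ioo 0 (1 / 2))
    (h : 0 < (-1) ^ j * bernoulliFun (2 * j + 2) a) :
    bernoulliFun (2 * j + 1) a * bernoulliFun (2 * j + 2) a < 0 := by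
  have hpos := mul_pos (neg_one_pow_mul_bernoulliFun_odd_pos j ha) h
  rwa [mul_mul_mul_comm, ← pow_add, Odd.neg_one_pow ⟨j, by ring⟩, neg_one_mul, neg_pos] at hpos

lemma bernoulliFun_mul_neg_of_half_lt {j : ℕ} {a : ℝ} (ha : a ∈ Ioo (1 / 2) 1)
    (h : (-1) ^ j * bernoulliFun (2 * j + 2) a < 0) :
    bernoulliFun (2 * j + 1) a * bernoulliFun (2 * j + 2) a < 0 := by
  have hpos := neg_one_pow_mul_bernoulliFun_odd_pos j (x := 1 - a)
    ⟨sub_pos.2 ha.2, by linarith [ha.1]⟩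
  rw [bernoulliFun_eval_one_sub, (odd_two_mul_add_one j).neg_one_pow] at hpos
  have hneg := mul_neg_of_pos_of_neg hpos h
  rwa [mul_mul_mul_comm, ← pow_add, Odd.neg_one_pow ⟨j, by ring⟩, neg_one_mul,
    neg_one_mul, neg_mul, neg_neg] at hneg

lemma strictMonoOn_neg_one_pow_mul_bernoulliFun (j : ℕ) :
    StrictMonoOn (fun x ↦ (-1) ^ j * bernoulliFun (2 * j + 2) x) (Icc (1 / 2) 1) := by
  intro x hx y hy hxy
  have hlt := strictAntiOn_neg_one_pow_mul_bernoulliFun j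
    (show 1 - y ∈ Icc 0 (1 / 2) from ⟨sub_nonneg.2 hy.2, by linarith [hy.1]⟩)
    (show 1 - x ∈ Icc 0 (1 / 2) from ⟨sub_nonneg.2 hx.2, by linarith [hx.1]⟩)
    (sub_lt_sub_left hxy 1)
  simpa only [bernoulliFun_eval_one_sub, Even.neg_one_pow (show Even (2 * j + 2) by grind),
    one_mul] using hlt

lemma neg_one_pow_mul_bernoulliFun_pos_iff {j : ℕ} {b x : ℝ} (hb : b ∈ Icc 0 (1 / 2))
    (hroot : bernoulliFun (2 * j + 2) b = 0) (hx : x ∈ Icc 0 (1 / 2)) :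
    0 < (-1) ^ j * bernoulliFun (2 * j + 2) x ↔ x < b := by
  simpa only [hroot, mul_zero] using
    (strictAntiOn_neg_one_pow_mul_bernoulliFun j).lt_iff_gt hb hx

lemma neg_one_pow_mul_bernoulliFun_neg_iff {j : ℕ} {b x : ℝ} (hb : b ∈ Icc (1 / 2) 1)
    (hroot : bernoulliFun (2 * j + 2) b = 0) (hx : x ∈ Icc (1 / 2) 1) :
    (-1) ^ j * bernoulliFun (2 * j + 2) x < 0 ↔ x < b := by
  simpa only [hroot, mul_zero] using
    (strictMonoOn_neg_one_pow_mul_bernoulliFun j).lt_iff_lt hx hb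

lemma bernoulliPoly_eq_bernoulliFun (n : ℕ) (x : ℝ) : bernoulliPoly n x = bernoulliFun n x :=
  (Polynomial.eval_map_algebraMap _ _).symm

end

/-- For an even integer `N ≥ 0` and `0 < a ≤ 1`, with `b⁻ ∈ [0,1/2)` and `b⁺ ∈ [1/2,1)`
roots of `B_{N+2}`, the Hurwitz zeta function has a real zero in `(-N-1, -N)` iff
`0 < a < b⁻` or `1/2 < a < b⁺`. -/
theorem hurwitzZeta_has_real_zero_iff_of_even (N : ℕ) (hN : Even N) (a : ℝ)
    (ha : 0 < a) (ha' : a ≤ 1) (bm bp : ℝ)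
    (hbm : bm ∈ Set.Ico (0 : ℝ) (1 / 2)) (hbm0 : bernoulliPoly (N + 2) bm = 0)
    (hbp : bp ∈ Set.Ico (1 / 2 : ℝ) 1) (hbp0 : bernoulliPoly (N + 2) bp = 0) :
    (∃ σ : ℝ, σ ∈ Set.Ioo (-(N : ℝ) - 1) (-(N : ℝ)) ∧
        hurwitzZeta (a : UnitAddCircle) (σ : ℂ) = 0) ↔
      (0 < a ∧ a < bm) ∨ (1 / 2 < a ∧ a < bp) := by
  obtain ⟨j, rfl⟩ := hN.two_dvd
  rw [bernoulliPoly_eq_bernoulliFun] at hbm0 hbp0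
  have hpos_iff (hle : a ≤ 1 / 2) :=
    neg_one_pow_mul_bernoulliFun_pos_iff (Ico_subset_Icc_self hbm) hbm0 ⟨ha.le, hle⟩
  have hneg_iff (hlt : 1 / 2 < a) :=
    neg_one_pow_mul_bernoulliFun_neg_iff (Ico_subset_Icc_self hbp) hbp0 ⟨hlt.le, ha'⟩
  constructor
  · rintro ⟨σ, hσ, hzero⟩
    by_contra hnot
    refine hurwitzZeta_ne_zero_of_bernoulliFun hσ ?_ hzero
    rcases le_or_gt a (1 / 2) with hle | hlt
    · exact .inl ⟨⟨ha, hle⟩, not_lt.1 fun h ↦ hnot (.inl ⟨ha, (hpos_iff hle).1 h⟩)⟩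
    · exact .inr ⟨⟨hlt, ha'⟩, not_lt.1 fun h ↦ hnot (.inr ⟨hlt, (hneg_iff hlt).1 h⟩)⟩
  · intro h
    apply exists_hurwitzZeta_eq_zero_of_bernoulliFun_mul_neg ⟨ha, ha'⟩
    rcases h with ⟨_, h⟩ | ⟨hlt, h⟩
    · have hhalf : a < 1 / 2 := h.trans hbm.2
      exact bernoulliFun_mul_neg_of_lt_half ⟨ha, hhalf⟩ ((hpos_iff hhalf.le).2 h)
    · exact bernoulliFun_mul_neg_of_half_lt ⟨hlt, h.trans hbp.2⟩ ((hneg_iff hlt).2 h)
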